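/- arXiv:1005.5725 — 2 statements merged into one kernel-verified Lean document; each statement's English description precedes it below -/
import Mathlib

section
/- Let p be a prime, q a power of p, R a commutative ring of characteristic p, I ⊆ R an ideal, and n ≥ 1. Let σ be the ring endomorphism of n×n matrices over the Laurent series ring R((z)) that applies a ↦ a^q to every coefficient of every entry. For matrices x, x' over R((z)) and m ≥ 1 write x ≡ x' mod I^m if every coefficient of every entry of x − x' lies in I^m. Let y and s be invertible n×n matrices over R((z)) with s ≡ y mod I. Define g_0 = 1 and g_{k+1} = s·σ(g_k)·y^{−1}. Then for every k ≥ 0: (a) g_k is invertible and g_k ≡ 1 mod I; (b) g_{k+1} ≡ g_k mod I^{q^k}; (c) g_k·y ≡ s·σ(g_k) mod I^{q^k}, i.e. y ≡ g_k^{−1}·s·σ(g_k) mod I^{q^k}; and (d) g_k is unique modulo I^{q^k} with properties (a) and (c): if h is an invertible n×n matrix over R((z)) with h ≡ 1 mod I and h·y ≡ s·σ(h) mod I^{q^k}, then h ≡ g_k mod I^{q^k}. (The inductive σ-conjugation approximation from the proof of Lemma 5.2.) -/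
/-- Two matrices over `R((z))` are congruent modulo an ideal `J ⊆ R`
(coefficientwise): every coefficient of every entry of `x - x'` lies in `J`. -/
def MatCong {R : Type*} [CommRing R] {n : ℕ}
    (x x' : Matrix (Fin n) (Fin n) (LaurentSeries R)) (J : Ideal R) : Prop :=
  ∀ (i j : Fin n) (t : ℤ), ((x - x') i j).coeff t ∈ J

/-!
The sequence `g k` is the orbit of `1` under the twisted conjugation `T h = s · σ(h) · y⁻¹`, and the
congruence `h · y ≡ s · σ(h)` says that `h` is an approximate fixed point of `T`. Since
`a ^ q - b ^ q = (a - b) ^ q` in characteristic `p`, the map `T` turns congruences modulo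
`I ^ q ^ k` into congruences modulo `I ^ q ^ (k + 1)`. Thus `T` is a contraction for the filtration
`I ^ q ^ k`, and the claims are the usual estimates for the iterates of a contraction.
-/

open Function HahnSeries

section Contraction

variable {X : Type*} {r : ℕ → Setoid X} {T : X → X}

theorem iterate_succ_rel_iterate (hT : ∀ k a b, r k a b → r (k + 1) (T a) (T b)) {x : X}
    (hx : r 0 (T x) x) (k : ℕ) : r k (T^[k + 1] x) (T^[k] x) := by
  induction k with
  | zero => exact hx
  | succ k ih => simpa only [iterate_succ_apply'] using hT k _ _ ih

theorem iterate_rel_zero (hr : Antitone r) (hT : ∀ k a b, r k a b → r (k + 1) (T a) (T b))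
    {x : X} (hx : r 0 (T x) x) (k : ℕ) : r 0 (T^[k] x) x := by
  induction k with
  | zero => exact (r 0).refl' x
  | succ k ih => exact (r 0).trans' (hr k.zero_le (iterate_succ_rel_iterate hT hx k)) ih

theorem rel_iterate_of_rel_apply (hr : Antitone r)
    (hT : ∀ k a b, r k a b → r (k + 1) (T a) (T b)) {x h : X} (hx : r 0 h x) {k : ℕ}
    (hfix : r k h (T h)) : r k h (T^[k] x) := by
  induction k with
  | zero => exact hx
  | succ k ih =>
    have approx : r k h (T^[k] x) := ih (hr k.le_succ hfix)
    rw [iterate_succ_apply']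
    exact (r (k + 1)).trans' hfix (hT k _ _ approx)

end Contraction

section TwistedConj

variable {M F : Type*} [Monoid M] [FunLike F M M]

/-- The twisted conjugation `h ↦ s · σ(h) · y⁻¹`, whose fixed points are the solutions of
`h · y = s · σ(h)`. -/
def twistedConj (σ : F) (s : M) (y : Mˣ) (h : M) : M :=
  s * σ h * ↑y⁻¹

variable {σ : F} {s : M} {y : Mˣ}

theorem isUnit_twistedConj [MonoidHomClass F M M] (hs : IsUnit s) {h : M} (hh : IsUnit h) :
    IsUnit (twistedConj σ s y h) :=
  (hs.mul (hh.map σ)).mul y⁻¹.isUnit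

theorem isUnit_iterate_twistedConj [MonoidHomClass F M M] (hs : IsUnit s) (k : ℕ) :
    IsUnit ((twistedConj σ s y)^[k] 1) := by
  induction k with
  | zero => exact isUnit_one
  | succ k ih =>
    rw [iterate_succ_apply']
    exact isUnit_twistedConj hs ih

theorem twistedConj_rel_twistedConj {c d : Con M} (hσ : ∀ a b, c a b → d (σ a) (σ b)) (a b : M)
    (hab : c a b) : d (twistedConj σ s y a) (twistedConj σ s y b) :=
  d.mul (d.mul (d.refl s) (hσ a b hab)) (d.refl _)

theorem rel_twistedConj_iff (c : Con M) (h : M) :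
    c h (twistedConj σ s y h) ↔ c (h * y) (s * σ h) := by
  constructor <;> intro hh
  · simpa only [twistedConj, Units.inv_mul_cancel_right] using c.mul hh (c.refl (y : M))
  · simpa only [twistedConj, Units.mul_inv_cancel_right] using c.mul hh (c.refl (↑y⁻¹ : M))

theorem twistedConj_one_rel_one [OneHomClass F M M] {c : Con M} (hsy : c s y) :
    c (twistedConj σ s y 1) 1 :=
  c.symm ((rel_twistedConj_iff c 1).2 (by
    simpa only [one_mul, map_one, mul_one] using c.symm hsy))

theorem twistedConj_approximation [MonoidHomClass F M M] {c : ℕ → Con M} (hc : Antitone c)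
    (hσ : ∀ k a b, c k a b → c (k + 1) (σ a) (σ b)) (hs : IsUnit s) (hsy : c 0 s y)
    {g : ℕ → M} (hg0 : g 0 = 1) (hgrec : ∀ k, g (k + 1) = s * σ (g k) * ↑y⁻¹) (k : ℕ) :
    (IsUnit (g k) ∧ c 0 (g k) 1) ∧ c k (g (k + 1)) (g k) ∧ c k (g k * y) (s * σ (g k)) ∧
      ∀ h, c 0 h 1 → c k (h * y) (s * σ h) → c k h (g k) := by
  have hg : ∀ m, g m = (twistedConj σ s y)^[m] 1 := fun m => by
    induction m with
    | zero => exact hg0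
    | succ m ih => rw [hgrec, ih, iterate_succ_apply', twistedConj]
  have hr : Antitone fun m => (c m).toSetoid := fun _ _ hab _ _ h => hc hab h
  have hT m := twistedConj_rel_twistedConj (s := s) (y := y) (hσ m)
  have hone : c 0 (twistedConj σ s y 1) 1 := twistedConj_one_rel_one hsy
  have hsucc : c k (g (k + 1)) (g k) := by
    rw [hg, hg]
    exact iterate_succ_rel_iterate (r := fun m => (c m).toSetoid) hT hone k
  refine ⟨⟨?_, ?_⟩, hsucc, ?_, fun h hh hfix => ?_⟩
  · exact hg k ▸ isUnit_iterate_twistedConj hs k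
  · exact hg k ▸ iterate_rel_zero hr hT hone k
  · exact (rel_twistedConj_iff (c k) (g k)).1 (by
      simpa only [twistedConj, ← hgrec] using (c k).symm hsucc)
  · exact hg k ▸ rel_iterate_of_rel_apply hr hT hh ((rel_twistedConj_iff (c k) h).2 hfix)

end TwistedConj

section Coefficients

variable {Γ R S : Type*} [AddCommMonoid Γ] [PartialOrder Γ] [IsOrderedCancelAddMonoid Γ]

/-- The ring homomorphism of Hahn series induced by applying a ring homomorphism to each
coefficient. It provides both the Frobenius `σ` and reduction modulo an ideal. -/
noncomputable def coeffMap [Semiring R] [Semiring S] (f : R →+* S) : R⟦Γ⟧ →+* S⟦Γ⟧ where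
  toFun x := x.map f
  map_zero' := HahnSeries.map_zero (f : ZeroHom R S)
  map_one' := HahnSeries.map_one f.toMonoidWithZeroHom
  map_add' _ _ := HahnSeries.map_add (f : R →+ S)
  map_mul' _ _ := HahnSeries.map_mul (f : R →ₙ+* S)

theorem coeff_coeffMap [Semiring R] [Semiring S] (f : R →+* S) (x : R⟦Γ⟧) (t : Γ) :
    (coeffMap f x).coeff t = f (x.coeff t) :=
  rfl

variable [CommRing R] [CommRing S] {n : Type*} [Fintype n]

variable (Γ n) in
/-- Congruence of matrices of Hahn series modulo an ideal `J` of the coefficient ring, encoded as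
equality after reducing every coefficient modulo `J`. -/
noncomputable def coeffCon (J : Ideal R) : RingCon (Matrix n n R⟦Γ⟧) :=
  (RingCon.ker (coeffMap (Ideal.Quotient.mk J))).matrix n

theorem coeffCon_iff {J : Ideal R} {A B : Matrix n n R⟦Γ⟧} :
    coeffCon Γ n J A B ↔ ∀ i j t, (A i j).coeff t - (B i j).coeff t ∈ J := by
  simp only [coeffCon, RingCon.matrix_apply, RingCon.ker_apply, HahnSeries.ext_iff, funext_iff,
    coeff_coeffMap, Ideal.Quotient.mk_eq_mk_iff_sub_mem]

theorem coeffCon_mono : Monotone fun J : Ideal R => coeffCon Γ n J :=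
  fun _ _ hJ _ _ h => coeffCon_iff.2 fun i j t => hJ (coeffCon_iff.1 h i j t)

theorem coeffCon_mapMatrix [DecidableEq n] {f : R →+* S} {J : Ideal R} {K : Ideal S}
    (hf : J ≤ K.comap f) {A B : Matrix n n R⟦Γ⟧} (h : coeffCon Γ n J A B) :
    coeffCon Γ n K ((coeffMap f).mapMatrix A) ((coeffMap f).mapMatrix B) :=
  coeffCon_iff.2 fun i j t => by
    simpa only [RingHom.mapMatrix_apply, Matrix.map_apply, coeff_coeffMap, Ideal.mem_comap,
      map_sub] using hf (coeffCon_iff.1 h i j t)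

theorem sigma_conjugation_approximation_general [DecidableEq n] {J : ℕ → Ideal R}
    (hJ : Antitone J) {φ : R →+* R} (hφ : ∀ k, J k ≤ (J (k + 1)).comap φ)
    {σ : Matrix n n R⟦Γ⟧ → Matrix n n R⟦Γ⟧}
    (hσ : ∀ A i j t, (σ A i j).coeff t = φ ((A i j).coeff t))
    {s : Matrix n n R⟦Γ⟧} {y : (Matrix n n R⟦Γ⟧)ˣ} (hs : IsUnit s)
    (hsy : coeffCon Γ n (J 0) s y) {g : ℕ → Matrix n n R⟦Γ⟧} (hg0 : g 0 = 1)
    (hgrec : ∀ k, g (k + 1) = s * σ (g k) * (y⁻¹).val) (k : ℕ) :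
    (IsUnit (g k) ∧ coeffCon Γ n (J 0) (g k) 1) ∧
      coeffCon Γ n (J k) (g (k + 1)) (g k) ∧
      coeffCon Γ n (J k) (g k * y) (s * σ (g k)) ∧
      ∀ h, coeffCon Γ n (J 0) h 1 → coeffCon Γ n (J k) (h * y) (s * σ h) →
        coeffCon Γ n (J k) h (g k) := by
  obtain rfl : σ = (coeffMap φ).mapMatrix := by
    ext A i j t
    exact hσ A i j t
  exact twistedConj_approximation (c := fun m => (coeffCon Γ n (J m)).toCon)
    (σ := (coeffMap φ).mapMatrix) (fun _ _ hkl => coeffCon_mono (hJ hkl))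
    (fun m _ _ hAB => coeffCon_mapMatrix (hφ m) hAB) hs hsy hg0 hgrec k

end Coefficients

theorem matCong_iff_coeffCon {R : Type*} [CommRing R] {n : ℕ}
    {A B : Matrix (Fin n) (Fin n) (LaurentSeries R)} {J : Ideal R} :
    MatCong A B J ↔ coeffCon ℤ (Fin n) J A B := by
  simp only [MatCong, Matrix.sub_apply, coeff_sub, coeffCon_iff]

theorem pow_le_comap_iterateFrobenius {R : Type*} [CommRing R] (p s : ℕ) [ExpChar R p]
    (I : Ideal R) (m : ℕ) : I ^ m ≤ (I ^ (m * p ^ s)).comap (iterateFrobenius R p s) :=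
  fun a ha => by
    rw [Ideal.mem_comap, iterateFrobenius_def, pow_mul]
    exact Ideal.pow_mem_pow ha _

/-- The inductive σ-conjugation approximation from the proof of Lemma 5.2: over a
commutative ring `R` of characteristic `p` with an ideal `I`, with `σ` the
coefficientwise `q`-Frobenius on matrices over `R((z))`, and invertible matrices
`y`, `s` with `s ≡ y mod I`, the sequence `g 0 = 1`, `g (k+1) = s·σ(g k)·y⁻¹`
satisfies: (a) `g k` is invertible and `g k ≡ 1 mod I`; (b) `g (k+1) ≡ g k mod
I^{q^k}`; (c) `g k · y ≡ s·σ(g k) mod I^{q^k}`; and (d) `g k` is the unique such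
element modulo `I^{q^k}`. -/
theorem sigma_conjugation_approximation (p : ℕ) (hp : p.Prime) (s0 : ℕ) (hs0 : 0 < s0)
    (q : ℕ) (hq : q = p ^ s0) (R : Type*) [CommRing R] [CharP R p] (I : Ideal R)
    (n : ℕ) (hn : 0 < n)
    (σ : Matrix (Fin n) (Fin n) (LaurentSeries R) → Matrix (Fin n) (Fin n) (LaurentSeries R))
    (hσ : ∀ (A : Matrix (Fin n) (Fin n) (LaurentSeries R)) (i j : Fin n) (t : ℤ),
      (σ A i j).coeff t = ((A i j).coeff t) ^ q)
    (y yi ss : Matrix (Fin n) (Fin n) (LaurentSeries R))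
    (hyyi : y * yi = 1) (hyiy : yi * y = 1) (hss : IsUnit ss)
    (hsy : MatCong ss y I)
    (g : ℕ → Matrix (Fin n) (Fin n) (LaurentSeries R))
    (hg0 : g 0 = 1) (hgrec : ∀ k, g (k + 1) = ss * σ (g k) * yi) :
    ∀ k : ℕ,
      (IsUnit (g k) ∧ MatCong (g k) 1 I) ∧
      MatCong (g (k + 1)) (g k) (I ^ q ^ k) ∧
      MatCong (g k * y) (ss * σ (g k)) (I ^ q ^ k) ∧
      (∀ h : Matrix (Fin n) (Fin n) (LaurentSeries R), IsUnit h → MatCong h 1 I →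
        MatCong (h * y) (ss * σ h) (I ^ q ^ k) → MatCong h (g k) (I ^ q ^ k)) := by
  subst hq
  have : ExpChar R p := .prime hp
  have antitone_pow : Antitone fun k => I ^ (p ^ s0) ^ k := fun _ _ hkl =>
    Ideal.pow_le_pow_right (Nat.pow_le_pow_right (pow_pos hp.pos s0) hkl)
  simp only [matCong_iff_coeffCon] at hsy ⊢
  intro k
  have approximation := sigma_conjugation_approximation_general (y := ⟨y, yi, hyyi, hyiy⟩)
    antitone_pow (fun _ => pow_le_comap_iterateFrobenius p s0 I _) hσ hss
    (by simpa only [pow_zero, pow_one] using hsy) hg0 hgrec k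
  simp only [pow_zero, pow_one] at approximation
  obtain ⟨ha, hb, hc, hd⟩ := approximation
  exact ⟨ha, hb, hc, fun h _ => hd h⟩
end

section
/- Let p be a prime, q a power of p, and k an algebraically closed field of characteristic p. Let σ denote the ring endomorphism of k((z)) applying a ↦ a^q to each coefficient of a Laurent series, applied entrywise to matrices. Fix n ≥ 1 and d ∈ ℤ and let ν ∈ N_d(n) be a Newton point. Write the distinct values of ν as λ_1 < … < λ_r with multiplicities n_1, …, n_r (so n_1 + … + n_r = n), and set m_i = n_i·λ_i, which is an integer by the integrality of break points. For r' ≥ 1 let P(r') be the r'×r' matrix over k((z)) with P(r')·e_l = e_{l+1} for l < r' and P(r')·e_{r'} = z·e_1, and let x_ν ∈ GL_n(k((z))) be the block diagonal matrix with diagonal blocks P(n_1)^{m_1}, …, P(n_r)^{m_r}. Let K = GL_n(k[[z]]), the group of n×n matrices over k[[z]] invertible over k[[z]]. Then for every nondecreasing tuple μ = (μ_1, …, μ_n) of integers with μ_1 + … + μ_n = d and with s_j(ν) ≥ s_j(μ) for all 1 ≤ j ≤ n (i.e. ν ≼ μ), there exists g ∈ GL_n(k((z))) such that g^{−1}·x_ν·σ(g)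 ∈ K·diag(z^{μ_1}, …, z^{μ_n})·K. (Converse of Mazur's inequality, Corollary 1.3, for G = GL_n: x_ν is a representative of the σ-conjugacy class with Newton point ν and Kottwitz point d, and the conclusion says [x_ν] ∩ K z^μ K ≠ ∅.) -/
/-!
Let `F = x σ(·)` be the `σ`-semilinear operator of `x`, where `x` has the slopes `mᵢ / nᵢ`. If `v`
is a cyclic vector annihilated by `f(F)`, where `f = ∏ (X ^ nᵢ - z ^ mᵢ)`, then the rescaled basis
`z ^ (μ₁ + ⋯ + μⱼ) F ^ (n - j) v`, `1 ≤ j ≤ n`, transforms `x` into `C z ^ μ` for a companion matrix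
`C` whose entries are coefficients of `-f` multiplied by powers of `z`. The Newton polygon of `f`
is `ν`, so `ν ≼ μ` makes these entries integral, and equality of the endpoints makes the corner
entry, hence `det C`, equal to `±1`.

To find `v`, take `θ` of exact period `nᵢ` under `σ` and `hᵢ = gcd(nᵢ, mᵢ)`: by a Vandermonde
argument the combination `∑ θ ^ l e_l`, `l < hᵢ`, of basis vectors of the `i`-th block generates
this block, and it is annihilated by `F ^ nᵢ - z ^ mᵢ`. As these factors of `f` are pairwise
coprime, the sum of the vectors of the blocks is cyclic.
-/

/-- The `j`-th partial sum `s_j(ν) = ν_0 + … + ν_{j-1}` of a tuple (0-indexed). -/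
def psum (ν : ℕ → ℚ) (j : ℕ) : ℚ := ∑ i ∈ Finset.range j, ν i

/-- `ν` (given by its values on `{0, …, n-1}`) is a Newton point for `GL_n`
with endpoint `d`: nondecreasing, total sum `d`, and the partial sum at every
break point is an integer. -/
def IsNewton (n : ℕ) (d : ℤ) (ν : ℕ → ℚ) : Prop :=
  (∀ i, i + 1 < n → ν i ≤ ν (i + 1)) ∧
  psum ν n = (d : ℚ) ∧
  ∀ j, 0 < j → j < n → ν (j - 1) < ν j → ∃ m : ℤ, psum ν j = (m : ℚ)

/-- The start index (cumulative multiplicity) of the `i`-th block. -/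
def cum {r : ℕ} (nn : Fin r → ℕ) (i : Fin r) : ℕ := ∑ i' ∈ Finset.Iio i, nn i'

/-- A Laurent series lies in the power-series subring `k[[z]] ⊆ k((z))`. -/
def IsPowerSeries {k : Type*} [Field k] (f : LaurentSeries k) : Prop :=
  ∀ t : ℤ, t < 0 → f.coeff t = 0

lemma sum_range_card_le_sum {M : Type*} [AddCommMonoid M] [PartialOrder M] [IsOrderedAddMonoid M]
    {f : ℕ → M} {n : ℕ} (hf : MonotoneOn f (Set.Iio n)) {U : Finset ℕ}
    (hU : ∀ t ∈ U, t < n) : ∑ t ∈ Finset.range U.card, f t ≤ ∑ t ∈ U, f t := by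
  let emb : Fin U.card ↪o ℕ := U.orderEmbOfFin rfl
  have emb_lt (k : Fin U.card) : emb k < n := hU _ (U.orderEmbOfFin_mem rfl k)
  have le_emb : ∀ k : Fin U.card, (k : ℕ) ≤ emb k := by
    rintro ⟨k, hk⟩
    induction k with
    | zero => exact Nat.zero_le _
    | succ k ih => exact (ih (by omega)).trans_lt (emb.strictMono (Fin.mk_lt_mk.2 k.lt_succ_self))
  calc ∑ t ∈ Finset.range U.card, f t
      = ∑ k : Fin U.card, f k := (Fin.sum_univ_eq_sum_range f _).symm
    _ ≤ ∑ k : Fin U.card, f (emb k) := Finset.sum_le_sum fun k _ =>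
        hf ((le_emb k).trans_lt (emb_lt k)) (emb_lt k) (le_emb k)
    _ = ∑ t ∈ Finset.univ.map emb.toEmbedding, f t :=
        (Finset.sum_map Finset.univ emb.toEmbedding f).symm
    _ = ∑ t ∈ U, f t := by rw [U.map_orderEmbOfFin_univ rfl]

lemma prod_zpow_eq_zpow_sum {ι G : Type*} [CommGroupWithZero G] {z : G} (hz : z ≠ 0) (T : Finset ι)
    (m : ι → ℤ) : ∏ i ∈ T, z ^ m i = z ^ ∑ i ∈ T, m i := by
  classical
  induction T using Finset.induction_on with
  | empty => simp
  | insert i T hi ih => rw [Finset.prod_insert hi, Finset.sum_insert hi, ih, zpow_add₀ hz]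

section SlopePolynomial

open Polynomial

lemma isCoprime_X_pow_sub_C {A : Type*} [CommRing A] {a b : A} {m n : ℕ}
    (h : IsUnit (a ^ n - b ^ m)) : IsCoprime (X ^ m - C a) (X ^ n - C b) := by
  have hpow : IsCoprime ((X ^ m) ^ n - C a ^ n) ((X ^ n) ^ m - C b ^ m) := by
    have := (isCoprime_X_sub_C_of_isUnit_sub h).map (expand A (m * n)).toRingHom
    simpa [pow_mul, mul_comm n m, ← pow_mul X n m] using this
  exact (hpow.of_isCoprime_of_dvd_left (sub_dvd_pow_sub_pow ..)).of_isCoprime_of_dvd_right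
    (sub_dvd_pow_sub_pow ..)

/-- The polynomial `∏ᵢ (X ^ nᵢ - z ^ mᵢ)`, which annihilates a cyclic vector of the isocrystal
whose slopes are the `mᵢ / nᵢ`. -/
noncomputable def slopePolynomial {E ι : Type*} [Field E] [Fintype ι] (z : E) (n : ι → ℕ)
    (m : ι → ℤ) : E[X] :=
  ∏ i, (X ^ n i - C (z ^ m i))

variable {E ι : Type*} [Field E] [Fintype ι] {z : E} {n : ι → ℕ} {m : ι → ℤ}

lemma monic_slopePolynomial (hn : ∀ i, n i ≠ 0) : (slopePolynomial z n m).Monic :=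
  monic_prod_of_monic _ _ fun i _ => monic_X_pow_sub_C _ (hn i)

lemma natDegree_slopePolynomial (hn : ∀ i, n i ≠ 0) :
    (slopePolynomial z n m).natDegree = ∑ i, n i := by
  rw [slopePolynomial, natDegree_prod_of_monic _ _ fun i _ => monic_X_pow_sub_C _ (hn i)]
  exact Finset.sum_congr rfl fun i _ => natDegree_X_pow_sub_C

lemma coeff_slopePolynomial [DecidableEq ι] (hz : z ≠ 0) (c : ℕ) :
    (slopePolynomial z n m).coeff c =
      ∑ T : Finset ι, if c = ∑ i ∈ Tᶜ, n i then (-1) ^ T.card * z ^ ∑ i ∈ T, m i else 0 := by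
  have hterm (T : Finset ι) : (-1) ^ T.card * (∏ i ∈ Finset.univ \ T, (X : E[X]) ^ n i) *
      ∏ i ∈ T, C (z ^ m i) = C ((-1) ^ T.card * z ^ ∑ i ∈ T, m i) * X ^ ∑ i ∈ Tᶜ, n i := by
    rw [← map_prod, Finset.prod_pow_eq_pow_sum, ← Finset.compl_eq_univ_sdiff,
      prod_zpow_eq_zpow_sum hz, C_mul, C_pow, C_neg, C_1]
    ring
  simp only [slopePolynomial, Finset.prod_sub, Finset.powerset_univ, hterm, finsetSum_coeff,
    coeff_C_mul_X_pow]

lemma coeff_zero_slopePolynomial (hz : z ≠ 0) (hn : ∀ i, n i ≠ 0) :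
    (slopePolynomial z n m).coeff 0 = (-1) ^ Fintype.card ι * z ^ ∑ i, m i := by
  simp [slopePolynomial, coeff_zero_eq_eval_zero, eval_prod, hn, Finset.prod_neg,
    prod_zpow_eq_zpow_sum hz]

lemma zpow_neg_mul_coeff_slopePolynomial_mem {R : Subring E} (hzR : z ∈ R) (hz : z ≠ 0) {c : ℕ}
    {s : ℤ} (hs : ∀ T : Finset ι, c + ∑ i ∈ T, n i = ∑ i, n i → s ≤ ∑ i ∈ T, m i) :
    z ^ (-s) * (slopePolynomial z n m).coeff c ∈ R := by
  classical
  rw [coeff_slopePolynomial hz, Finset.mul_sum]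
  refine sum_mem fun T _ => ?_
  split_ifs with hc
  · obtain ⟨e, he⟩ := Int.eq_ofNat_of_zero_le
      (sub_nonneg.2 (hs T (by rw [hc, Finset.sum_compl_add_sum])))
    rw [mul_left_comm, ← zpow_add₀ hz, neg_add_eq_sub, he, zpow_natCast]
    exact mul_mem (pow_mem (neg_mem (one_mem R)) _) (pow_mem hzR e)
  · simp

end SlopePolynomial

section CyclicSpan

open Polynomial

variable {E N : Type*} (L : Type*) [CommRing E] [Ring L] [AddCommGroup N] [Module E N]
  [Module L N]

/-- The `L`-submodule generated by the orbit of `v` under an endomorphism `F` which need only be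
linear over the subring `E` of constants. -/
def cyclicSpan (F : Module.End E N) (v : N) : Submodule L N :=
  Submodule.span L (Set.range fun j : ℕ => (F ^ j) v)

variable {L} {F : Module.End E N} {v w : N}

lemma pow_apply_mem_cyclicSpan (j : ℕ) : (F ^ j) v ∈ cyclicSpan L F v :=
  Submodule.subset_span ⟨j, rfl⟩

variable [Algebra E L] [IsScalarTower E L N]

lemma aeval_mem_cyclicSpan (f : E[X]) : aeval F f v ∈ cyclicSpan L F v := by
  rw [aeval_eq_sum_range, LinearMap.sum_apply]
  exact sum_mem fun j _ => Submodule.smul_of_tower_mem _ _ (pow_apply_mem_cyclicSpan j)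

lemma cyclicSpan_le_of_eq_aeval {f : E[X]} (hw : w = aeval F f v) :
    cyclicSpan L F w ≤ cyclicSpan L F v := by
  refine Submodule.span_le.2 (Set.range_subset_iff.2 fun j => ?_)
  have hj : (F ^ j) w = aeval F (X ^ j * f) v := by simp [hw]
  simpa only [hj, SetLike.mem_coe] using aeval_mem_cyclicSpan (X ^ j * f)

lemma cyclicSpan_eq_span_of_aeval_eq_zero {f : E[X]} (hf : f.Monic) (hv : aeval F f v = 0) :
    cyclicSpan L F v = Submodule.span L (Set.range fun j : Fin f.natDegree => (F ^ (j : ℕ)) v) := by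
  refine le_antisymm (Submodule.span_le.2 (Set.range_subset_iff.2 fun j => ?_))
    (Submodule.span_mono (Set.range_subset_iff.2 fun j => ⟨j, rfl⟩))
  have hmod : (F ^ j) v = aeval F (X ^ j %ₘ f) v := by
    have := congr(aeval F $(modByMonic_add_div (X ^ j) f) v)
    simpa [mul_comm f, hv] using this.symm
  rw [SetLike.mem_coe, hmod, ← sum_modByMonic_coeff hf degree_le_natDegree, map_sum,
    LinearMap.sum_apply]
  refine sum_mem fun i _ => ?_
  rw [aeval_monomial, ← Algebra.smul_def, LinearMap.smul_apply]
  exact Submodule.smul_of_tower_mem _ _ (Submodule.subset_span ⟨i, rfl⟩)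

lemma pow_apply_eq_sum_of_aeval_eq_zero {n : ℕ} {f : E[X]} (hf : f.Monic) (hfn : f.natDegree = n)
    (hv : aeval F f v = 0) :
    (F ^ n) v = ∑ i : Fin n, -f.coeff i.rev • (F ^ (i.rev : ℕ)) v := by
  rw [hf.as_sum, hfn, map_add, LinearMap.add_apply, add_eq_zero_iff_eq_neg] at hv
  refine Eq.trans ?_
    (Equiv.sum_comp Fin.revPerm fun i : Fin n => -f.coeff i • (F ^ (i : ℕ)) v).symm
  simpa [← Algebra.smul_def, Finset.sum_range] using hv

lemma aeval_prod_sum_eq_zero {ι : Type*} [Fintype ι] {P : ι → E[X]} {v : ι → N}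
    (hv : ∀ i, aeval F (P i) (v i) = 0) : aeval F (∏ i, P i) (∑ i, v i) = 0 := by
  classical
  rw [map_sum]
  refine Finset.sum_eq_zero fun i _ => ?_
  rw [← Finset.prod_erase_mul _ _ (Finset.mem_univ i), map_mul, Module.End.mul_apply, hv, map_zero]

-- Bézout gives `a`, `b` with `a * P i + b * ∏ P j = 1`, the product over `j ≠ i`; the second
-- summand projects `∑ v j` onto `v i`.
lemma iSup_cyclicSpan_le_cyclicSpan_sum {ι : Type*} [Fintype ι] {P : ι → E[X]} {v : ι → N}
    (hP : Pairwise fun i j => IsCoprime (P i) (P j)) (hv : ∀ i, aeval F (P i) (v i) = 0) :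
    ⨆ i, cyclicSpan L F (v i) ≤ cyclicSpan L F (∑ i, v i) := by
  classical
  refine iSup_le fun i => ?_
  obtain ⟨a, b, hab⟩ : IsCoprime (P i) (∏ j ∈ Finset.univ.erase i, P j) :=
    IsCoprime.prod_right fun j hj => hP (Finset.ne_of_mem_erase hj).symm
  refine cyclicSpan_le_of_eq_aeval (f := b * ∏ j ∈ Finset.univ.erase i, P j) ?_
  rw [map_sum, Finset.sum_eq_single i]
  · rw [eq_sub_of_add_eq' hab]
    simp [hv]
  · intro j _ hj
    rw [← Finset.prod_erase_mul _ _ (Finset.mem_erase.2 ⟨hj, Finset.mem_univ j⟩), ← mul_assoc,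
      map_mul, Module.End.mul_apply, hv, map_zero]
  · simp

end CyclicSpan

lemma mem_of_sum_smul_mem {ι R M : Type*} [Fintype ι] [DecidableEq ι] [CommRing R] [AddCommGroup M]
    [Module R M] {W : Submodule R M} {A : Matrix ι ι R} (hA : IsUnit A.det) {b : ι → M}
    (h : ∀ i, ∑ l, A i l • b l ∈ W) (l : ι) : b l ∈ W := by
  have hb : b l = ∑ i, A⁻¹ l i • ∑ l', A i l' • b l' := by
    simp only [Finset.smul_sum, smul_smul]
    rw [Finset.sum_comm]
    simp only [← Finset.sum_smul, ← Matrix.mul_apply, Matrix.nonsing_inv_mul A hA,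
      Matrix.one_apply, ite_smul, one_smul, zero_smul, Finset.sum_ite_eq, Finset.mem_univ, if_true]
  rw [hb]
  exact sum_mem fun i _ => W.smul_mem _ (h i)

lemma exists_eq_add_mul_add_mul {n : ℕ} (hn : n ≠ 0) (m t : ℤ) :
    ∃ (l : Fin (Int.gcd n m)) (j : ℕ) (s : ℤ), t = l + j * m + s * n := by
  set h := Int.gcd n m
  have hn' : (n : ℤ) ≠ 0 := mod_cast hn
  have hh : (0 : ℤ) < h := mod_cast Int.gcd_pos_of_ne_zero_left m hn'
  obtain ⟨l, hl⟩ := Int.eq_ofNat_of_zero_le (t.emod_nonneg hh.ne')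
  obtain ⟨j, hj⟩ := Int.eq_ofNat_of_zero_le (Int.emod_nonneg (t / h * Int.gcdB n m) hn')
  refine ⟨⟨l, by have := t.emod_lt_of_pos hh; omega⟩, j,
    t / h * Int.gcdA n m + t / h * Int.gcdB n m / n * m, ?_⟩
  have hbezout : (h : ℤ) = n * Int.gcdA n m + m * Int.gcdB n m := Int.gcd_eq_gcd_ab n m
  rw [← hj]
  linear_combination t / h * hbezout + hl - t.emod_add_mul_ediv h
    - m * Int.emod_add_mul_ediv (t / h * Int.gcdB n m) n

section ShiftFamily

/-- The extension by `e (t + n) = z • e t` of a basis `e 0, …, e (n - 1)` of a block, on which the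
operator `F` of slope `m / n` acts by the shift `e t ↦ e (t + m)`. -/
structure IsShiftFamily {L N : Type*} [DivisionRing L] [AddCommGroup N] [Module L N] (F : N → N)
    (z : L) (n : ℕ) (m : ℤ) (e : ℤ → N) : Prop where
  apply_eq (t : ℤ) : F (e t) = e (t + m)
  apply_add_mul (s t : ℤ) : e (t + s * n) = z ^ s • e t

variable {E L N : Type*} [CommRing E] [Field L] [AddCommGroup N] [Module E N] [Module L N]
  {σ : L →+* L} {F : Module.End E N} {z θ : L} {n h : ℕ} {m : ℤ} {e : ℤ → N}

lemma IsShiftFamily.pow_apply_sum (hF : ∀ (c : L) w, F (c • w) = σ c • F w)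
    (he : IsShiftFamily F z n m e) (j : ℕ) :
    (F ^ j) (∑ l : Fin h, θ ^ (l : ℕ) • e l) =
      ∑ l : Fin h, (σ^[j] θ) ^ (l : ℕ) • e (l + j * m) := by
  induction j with
  | zero => simp
  | succ j ih =>
    rw [pow_succ', Module.End.mul_apply, ih, map_sum]
    refine Finset.sum_congr rfl fun l _ => ?_
    rw [hF, he.apply_eq, map_pow, ← Function.iterate_succ_apply' σ]
    congr 2
    push_cast
    ring

lemma IsShiftFamily.pow_apply_sum_self (hF : ∀ (c : L) w, F (c • w) = σ c • F w)
    (he : IsShiftFamily F z n m e) (hθ : σ^[n] θ = θ) :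
    (F ^ n) (∑ l : Fin h, θ ^ (l : ℕ) • e l) = z ^ m • ∑ l : Fin h, θ ^ (l : ℕ) • e l := by
  rw [he.pow_apply_sum hF, hθ, Finset.smul_sum]
  refine Finset.sum_congr rfl fun l _ => ?_
  rw [mul_comm (n : ℤ), he.apply_add_mul, smul_comm]

-- Up to powers of `z`, the images of `∑ θ ^ l • e l` under `F ^ (j + n' * i)`, `i < h`, are the
-- combinations of the `e (l + j * m)` given by a Vandermonde matrix with distinct nodes.
lemma IsShiftFamily.apply_add_mul_mem_cyclicSpan (hz : z ≠ 0)
    (hF : ∀ (c : L) w, F (c • w) = σ c • F w) (he : IsShiftFamily F z n m e) (hn : n ≠ 0)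
    (hθ : Function.minimalPeriod σ θ = n) (hhn : h ∣ n) (hhm : (h : ℤ) ∣ m) (j : ℕ) (l : Fin h) :
    e (l + j * m) ∈ cyclicSpan L F (∑ l : Fin h, θ ^ (l : ℕ) • e l) := by
  obtain ⟨n', rfl⟩ := hhn
  obtain ⟨m', rfl⟩ := hhm
  have hn' : 0 < n' := Nat.pos_of_ne_zero (right_ne_zero_of_mul hn)
  have hnodes : Function.Injective fun i : Fin h => σ^[j + n' * i] θ := fun i i' hii' => by
    simp only [Function.iterate_add_apply] at hii'
    have hlt (i : Fin h) : n' * (i : ℕ) ∈ Set.Iio (Function.minimalPeriod σ θ) := by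
      rw [hθ, mul_comm h]
      exact Nat.mul_lt_mul_of_pos_left i.2 hn'
    exact Fin.ext (Nat.eq_of_mul_eq_mul_left hn' (Function.iterate_injOn_Iio_minimalPeriod
      (hlt i) (hlt i') (σ.injective.iterate j hii')))
  refine mem_of_sum_smul_mem (b := fun l : Fin h => e (l + j * (h * m')))
    (Matrix.det_vandermonde_ne_zero_iff.2 hnodes).isUnit (fun i => ?_) l
  have hcombination : (F ^ (j + n' * i)) (∑ l : Fin h, θ ^ (l : ℕ) • e l) = z ^ (m' * i) •
      ∑ l, Matrix.vandermonde (fun i : Fin h => σ^[j + n' * i] θ) i l • e (l + j * (h * m')) := by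
    rw [he.pow_apply_sum hF, Finset.smul_sum]
    refine Finset.sum_congr rfl fun l _ => ?_
    rw [smul_comm, ← he.apply_add_mul, Matrix.vandermonde_apply]
    congr 2
    push_cast
    ring
  exact (Submodule.smul_mem_iff _ (zpow_ne_zero _ hz)).1
    (hcombination ▸ pow_apply_mem_cyclicSpan (j + n' * i))

lemma IsShiftFamily.exists_cyclic_vector (hz : z ≠ 0) (hF : ∀ (c : L) w, F (c • w) = σ c • F w)
    (he : IsShiftFamily F z n m e) (hn : n ≠ 0) (hθ : Function.minimalPeriod σ θ = n) :
    ∃ v, (F ^ n) v = z ^ m • v ∧ ∀ t, e t ∈ cyclicSpan L F v := by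
  refine ⟨∑ l : Fin (Int.gcd n m), θ ^ (l : ℕ) • e l, he.pow_apply_sum_self hF ?_, fun t => ?_⟩
  · exact hθ ▸ Function.iterate_minimalPeriod
  · obtain ⟨l, j, s, rfl⟩ := exists_eq_add_mul_add_mul hn m t
    rw [he.apply_add_mul]
    exact Submodule.smul_mem _ _ (he.apply_add_mul_mem_cyclicSpan hz hF hn hθ
      (mod_cast Int.gcd_dvd_left (n : ℤ) m) (Int.gcd_dvd_right (n : ℤ) m) j l)

end ShiftFamily

lemma ne_zero_of_zpow_injective {G : Type*} [GroupWithZero G] {z : G}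
    (hz : Function.Injective fun t : ℤ => z ^ t) : z ≠ 0 := by
  rintro rfl
  simpa using @hz 1 2

section PeriodicExtension

variable {L N : Type*} [DivisionRing L] [AddCommGroup N] [Module L N] {z : L} {n : ℕ} [NeZero n]

/-- The family indexed by `ℤ` which restricts to `b 0, …, b (n - 1)` and is multiplied by `z` when
its index increases by `n`. -/
def periodicExtension (z : L) (b : Fin n → N) (t : ℤ) : N :=
  have hn : (0 : ℤ) < n := mod_cast NeZero.pos n
  z ^ (t / n) • b ⟨(t % n).toNat, (Int.toNat_lt (t.emod_nonneg hn.ne')).2 (t.emod_lt_of_pos hn)⟩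

lemma periodicExtension_natCast (b : Fin n → N) (l : Fin n) :
    periodicExtension z b (l : ℕ) = b l := by
  simp [periodicExtension, Int.emod_eq_of_lt, Int.ediv_eq_zero_of_lt]

lemma periodicExtension_add_mul (hz : z ≠ 0) (b : Fin n → N) (s t : ℤ) :
    periodicExtension z b (t + s * n) = z ^ s • periodicExtension z b t := by
  have hn : (n : ℤ) ≠ 0 := mod_cast NeZero.ne n
  simp only [periodicExtension, Int.add_mul_ediv_right t s hn, Int.add_mul_emod_self_right,
    smul_smul, ← zpow_add₀ hz, add_comm s]

lemma isShiftFamily_periodicExtension {σ : L →+* L} (hz : z ≠ 0) (hσz : σ z = z) {F : N → N}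
    (hF : ∀ (c : L) w, F (c • w) = σ c • F w) {m : ℤ} {b : Fin n → N}
    (hb : ∀ l, F (b l) = periodicExtension z b (l + m)) :
    IsShiftFamily F z n m (periodicExtension z b) where
  apply_eq t := by
    have hn : (n : ℤ) ≠ 0 := mod_cast NeZero.ne n
    rw [periodicExtension, hF, hb, map_zpow₀, hσz, ← periodicExtension_add_mul hz]
    congr 1
    simp only [Int.toNat_of_nonneg (t.emod_nonneg hn)]
    linear_combination Int.emod_add_mul_ediv t n
  apply_add_mul s t := periodicExtension_add_mul hz b s t

end PeriodicExtension

section TwistedOperator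

variable {E L κ : Type*} [CommSemiring E] [CommSemiring L] [Algebra E L] [Fintype κ]

/-- The operator `w ↦ x * σ(w)` of the isocrystal `(L ^ κ, x)`; it is `σ`-semilinear, hence linear
over a field `E` of constants. -/
def twistedMulVec (σ : L →ₐ[E] L) (x : Matrix κ κ L) : Module.End E (κ → L) :=
  x.mulVecLin.restrictScalars E ∘ₗ σ.toLinearMap.compLeft κ

lemma twistedMulVec_apply (σ : L →ₐ[E] L) (x : Matrix κ κ L) (w : κ → L) :
    twistedMulVec σ x w = x.mulVec (σ ∘ w) :=
  rfl

lemma twistedMulVec_smul (σ : L →ₐ[E] L) (x : Matrix κ κ L) (c : L) (w : κ → L) :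
    twistedMulVec σ x (c • w) = σ c • twistedMulVec σ x w := by
  rw [twistedMulVec_apply, twistedMulVec_apply, ← Matrix.mulVec_smul]
  congr 1
  ext
  simp

lemma twistedMulVec_single_one [DecidableEq κ] (σ : L →ₐ[E] L) (x : Matrix κ κ L) (j : κ) :
    twistedMulVec σ x (Pi.single j 1) = x.col j := by
  rw [twistedMulVec_apply, ← Matrix.mulVec_single_one]
  congr 1
  ext i
  simp [Pi.single_apply, apply_ite σ]

end TwistedOperator

section BlockShift

open Polynomial

/-- The matrix `P(n) ^ m`, where `P(n)` sends each standard basis vector to the next one and the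
last one to `z` times the first. -/
def shiftMatrix {L : Type*} [DivisionRing L] (z : L) (n : ℕ) (m : ℤ) : Matrix (Fin n) (Fin n) L :=
  .of fun a b => if (a : ℤ) = (b + m) % n then z ^ ((b + m) / n) else 0

/-- The block diagonal matrix with blocks `P(nᵢ) ^ mᵢ`, its rows and columns being enumerated by
`e`. -/
def blockShiftMatrix {L ι κ : Type*} [DivisionRing L] [DecidableEq ι] (z : L) (n : ι → ℕ)
    (m : ι → ℤ) (e : (Σ i, Fin (n i)) ≃ κ) : Matrix κ κ L :=
  (Matrix.blockDiagonal' fun i => shiftMatrix z (n i) (m i)).reindex e e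

variable {E L ι κ : Type*} [Field E] [Field L] [Algebra E L] [DecidableEq ι] {n : ι → ℕ} {m : ι → ℤ}

lemma col_blockShiftMatrix [∀ i, NeZero (n i)] [DecidableEq κ] (z : L) (e : (Σ i, Fin (n i)) ≃ κ)
    (i : ι) (l : Fin (n i)) : (blockShiftMatrix z n m e).col (e ⟨i, l⟩) =
      periodicExtension z (fun l => Pi.single (e ⟨i, l⟩) (1 : L)) (l + m i) := by
  ext a
  obtain ⟨⟨i', l'⟩, rfl⟩ := e.surjective a
  have hmod := Int.emod_nonneg (l + m i) (b := n i) (mod_cast NeZero.ne (n i))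
  by_cases hi : i' = i
  · subst hi
    simp only [blockShiftMatrix, shiftMatrix, Matrix.reindex_apply, Matrix.col_apply,
      Matrix.submatrix_apply, Equiv.symm_apply_apply, Matrix.blockDiagonal'_apply_eq,
      Matrix.of_apply, periodicExtension, Pi.smul_apply, Pi.single_apply, e.apply_eq_iff_eq,
      Sigma.mk.injEq, heq_eq_eq, Fin.ext_iff, true_and, smul_eq_mul, mul_ite, mul_one, mul_zero]
    exact if_congr (by omega) rfl rfl
  · simp [blockShiftMatrix, periodicExtension, Matrix.blockDiagonal'_apply_ne _ _ _ hi, hi]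

variable [Fintype κ] {z : E}

lemma exists_cyclic_vector_block [∀ i, NeZero (n i)] [DecidableEq κ] {σ : L →ₐ[E] L} (hz : z ≠ 0)
    (e : (Σ i, Fin (n i)) ≃ κ) {i : ι} {θ : L} (hθ : Function.minimalPeriod σ θ = n i) :
    ∃ v, (twistedMulVec σ (blockShiftMatrix (algebraMap E L z) n m e) ^ n i) v = z ^ m i • v ∧
      ∀ l, Pi.single (e ⟨i, l⟩) 1 ∈
        cyclicSpan L (twistedMulVec σ (blockShiftMatrix (algebraMap E L z) n m e)) v := by
  have hz' : algebraMap E L z ≠ 0 := by simpa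
  obtain ⟨v, hv, hmem⟩ := (isShiftFamily_periodicExtension (σ := (σ : L →+* L)) (m := m i)
    (b := fun l : Fin (n i) => Pi.single (e ⟨i, l⟩) 1) hz' (σ.commutes z) (twistedMulVec_smul σ _)
    fun l => by rw [← col_blockShiftMatrix, twistedMulVec_single_one]).exists_cyclic_vector
    hz' (twistedMulVec_smul σ _) (NeZero.ne _) hθ
  refine ⟨v, by rw [hv, ← map_zpow₀, algebraMap_smul], fun l => ?_⟩
  simpa only [periodicExtension_natCast] using hmem l

lemma exists_cyclic_vector_blockShiftMatrix [Fintype ι] (σ : L →ₐ[E] L)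
    (hz : Function.Injective fun t : ℤ => z ^ t) (hn : ∀ i, n i ≠ 0)
    (hslope : Pairwise fun i j => m i * n j ≠ m j * n i)
    (hθ : ∀ i, ∃ θ : L, Function.minimalPeriod σ θ = n i) (e : (Σ i, Fin (n i)) ≃ κ) :
    ∃ v, aeval (twistedMulVec σ (blockShiftMatrix (algebraMap E L z) n m e))
        (slopePolynomial z n m) v = 0 ∧
      cyclicSpan L (twistedMulVec σ (blockShiftMatrix (algebraMap E L z) n m e)) v = ⊤ := by
  classical
  have (i : ι) : NeZero (n i) := ⟨hn i⟩
  choose θ hθ using hθ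
  choose v hv hmem using fun i =>
    exists_cyclic_vector_block (m := m) (ne_zero_of_zpow_injective hz) e (hθ i)
  have hcoprime : Pairwise fun i j => IsCoprime (X ^ n i - C (z ^ m i)) (X ^ n j - C (z ^ m j)) :=
    fun i j hij => isCoprime_X_pow_sub_C (sub_ne_zero.2 (by
      simpa only [← zpow_natCast, ← zpow_mul] using hz.ne (hslope hij))).isUnit
  have hannihilates (i : ι) :
      aeval (twistedMulVec σ (blockShiftMatrix (algebraMap E L z) n m e))
        (X ^ n i - C (z ^ m i)) (v i) = 0 := by
    simp [hv]
  refine ⟨∑ i, v i, aeval_prod_sum_eq_zero hannihilates, ?_⟩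
  rw [eq_top_iff, ← (Pi.basisFun L κ).span_eq, Submodule.span_le, Set.range_subset_iff]
  intro j
  obtain ⟨⟨i, l⟩, rfl⟩ := e.surjective j
  rw [Pi.basisFun_apply]
  exact iSup_cyclicSpan_le_cyclicSpan_sum hcoprime hannihilates
    (Submodule.mem_iSup_of_mem i (hmem i l))

end BlockShift

section CompanionMatrix

/-- The companion matrix with first column `u`: it sends the first standard basis vector to `u` and
each of the others to its predecessor. -/
def companionMatrix {R : Type*} [Zero R] [One R] {n : ℕ} (u : Fin n → R) :
    Matrix (Fin n) (Fin n) R :=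
  .of fun a b => if (b : ℕ) = 0 then u a else if (a : ℕ) + 1 = b then 1 else 0

lemma sum_companionMatrix_smul_of_val_eq_zero {R M : Type*} [Semiring R] [AddCommMonoid M]
    [Module R M] {n : ℕ} {j : Fin n} (hj : (j : ℕ) = 0) (u : Fin n → R) (b : Fin n → M) :
    ∑ i, companionMatrix u i j • b i = ∑ i, u i • b i := by
  simp only [companionMatrix, Matrix.of_apply, if_pos hj]

lemma sum_companionMatrix_smul_of_val_add_one_eq {R M : Type*} [Semiring R] [AddCommMonoid M]
    [Module R M] {n : ℕ} {i j : Fin n} (hij : (i : ℕ) + 1 = j) (u : Fin n → R) (b : Fin n → M) :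
    ∑ i, companionMatrix u i j • b i = b i := by
  simp [companionMatrix, ← hij, Fin.val_inj]

lemma map_companionMatrix {R S : Type*} [NonAssocSemiring R] [NonAssocSemiring S] (f : R →+* S)
    {n : ℕ} (u : Fin n → R) : (companionMatrix u).map f = companionMatrix (f ∘ u) := by
  ext a b
  simp only [companionMatrix, Matrix.map_apply, Matrix.of_apply, Function.comp_apply, apply_ite f,
    map_one, map_zero]

lemma det_companionMatrix {R : Type*} [CommRing R] {n : ℕ} (u : Fin (n + 1) → R) :
    (companionMatrix u).det = (-1) ^ n * u (Fin.last n) := by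
  have hminor : (companionMatrix u).submatrix (Fin.last n).succAbove (Fin.succAbove 0) = 1 := by
    ext a b
    simp only [companionMatrix, Matrix.submatrix_apply, Matrix.of_apply, Fin.succAbove_last,
      Fin.zero_succAbove, Fin.val_succ, Fin.val_castSucc, Matrix.one_apply, Fin.ext_iff]
    simp
  rw [Matrix.det_succ_row _ (Fin.last n), Finset.sum_eq_single 0]
  · rw [hminor]
    simp [companionMatrix]
  · intro b _ hb
    simp [companionMatrix, hb, b.2.ne']
  · simp

lemma isUnit_det_companionMatrix {R : Type*} [CommRing R] {n : ℕ} {u : Fin n → R}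
    (hu : ∀ i : Fin n, (i : ℕ) + 1 = n → IsUnit (u i)) : IsUnit (companionMatrix u).det := by
  cases n with
  | zero => simp
  | succ n =>
    rw [det_companionMatrix]
    exact (isUnit_one.neg.pow n).mul (hu (Fin.last n) rfl)

end CompanionMatrix

section LatticeBasis

open Polynomial

variable {E L : Type*} [Field E] [Field L] [Algebra E L] {σ : L →ₐ[E] L} {n : ℕ}

lemma exists_GL_inv_mul_mul_map_eq {κ : Type*} [Fintype κ] [DecidableEq κ] {x C : Matrix κ κ L}
    {b : κ → κ → L} (hb : Submodule.span L (Set.range b) = ⊤)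
    (hC : ∀ j, twistedMulVec σ x (b j) = ∑ i, C i j • b i) :
    ∃ g : GL κ L, (↑g⁻¹ : Matrix κ κ L) * x * (g : Matrix κ κ L).map σ = C := by
  obtain ⟨g, hgb⟩ : IsUnit (Matrix.of b).transpose := Matrix.linearIndependent_cols_iff_isUnit.1
    (linearIndependent_of_top_le_span_of_card_eq_finrank hb.ge (by simp))
  have hg : x * (g : Matrix κ κ L).map σ = (g : Matrix κ κ L) * C := by
    ext a j
    rw [hgb]
    calc (x * (Matrix.of b).transpose.map σ) a j = twistedMulVec σ x (b j) a := rfl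
      _ = ((Matrix.of b).transpose * C) a j := by simp [hC, Matrix.mul_apply, mul_comm (C _ j)]
  exact ⟨g, by rw [mul_assoc, hg, Units.inv_mul_cancel_left]⟩

lemma exists_GL_inv_mul_mul_map_eq_companionMatrix_mul_diagonal {x : Matrix (Fin n) (Fin n) L}
    {z : L} (hz : z ≠ 0) (hσz : σ z = z) {v u : Fin n → L}
    (hspan : Submodule.span L (Set.range fun j : Fin n => (twistedMulVec σ x ^ (j : ℕ)) v) = ⊤)
    (hv : (twistedMulVec σ x ^ n) v = ∑ i, u i • (twistedMulVec σ x ^ (i.rev : ℕ)) v) (μ : ℕ → ℤ) :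
    ∃ g : GL (Fin n) L,
      (↑g⁻¹ : Matrix (Fin n) (Fin n) L) * x * (g : Matrix (Fin n) (Fin n) L).map σ =
        companionMatrix (fun i : Fin n => z ^ (-∑ t ∈ Finset.range (i + 1), μ t) * u i) *
          Matrix.diagonal fun i : Fin n => z ^ μ i := by
  let s (j : ℕ) : ℤ := ∑ t ∈ Finset.range j, μ t
  let b (i : Fin n) : Fin n → L := z ^ s (i + 1) • (twistedMulVec σ x ^ (i.rev : ℕ)) v
  have hb : Submodule.span L (Set.range b) = ⊤ := by
    rw [← Fin.rev_surjective.range_comp] at hspan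
    exact Module.Basis.units_smul_span_eq_top hspan
      (w := fun i => Units.mk0 (z ^ s (i + 1)) (zpow_ne_zero _ hz))
  have hFb (j : Fin n) :
      twistedMulVec σ x (b j) = z ^ s (j + 1) • (twistedMulVec σ x ^ (n - j)) v := by
    rw [twistedMulVec_smul, ← Module.End.mul_apply, ← pow_succ', map_zpow₀, hσz, Fin.val_rev,
      ← Nat.sub_sub, Nat.sub_add_cancel (by omega)]
  refine exists_GL_inv_mul_mul_map_eq hb fun j => ?_
  simp only [Matrix.mul_diagonal, mul_comm _ (z ^ μ j), mul_smul (z ^ μ j), ← Finset.smul_sum]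
  rw [hFb]
  by_cases hj : (j : ℕ) = 0
  · have hs : s 1 = μ 0 := Finset.sum_range_one μ
    rw [sum_companionMatrix_smul_of_val_eq_zero hj, hj, Nat.sub_zero, zero_add, hs, hv]
    refine congr(z ^ μ 0 • $(Finset.sum_congr rfl fun i _ => ?_))
    rw [smul_smul, mul_right_comm, ← zpow_add₀ hz, neg_add_cancel, zpow_zero, one_mul]
  · obtain ⟨i, hij⟩ : ∃ i : Fin n, (i : ℕ) + 1 = j := ⟨⟨j - 1, by omega⟩, by simp; omega⟩
    have hs : s (j + 1) = μ j + s j := (Finset.sum_range_succ μ j).trans (add_comm _ _)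
    rw [sum_companionMatrix_smul_of_val_add_one_eq hij, smul_smul, ← zpow_add₀ hz, hij, hs,
      Fin.val_rev, hij]

lemma exists_GL_inv_mul_mul_map_eq_map_mul_diagonal {x : Matrix (Fin n) (Fin n) L} {z : E}
    (hz : z ≠ 0) {f : E[X]} (hf : f.Monic) (hfn : f.natDegree = n) {v : Fin n → L}
    (hv : aeval (twistedMulVec σ x) f v = 0) (hspan : cyclicSpan L (twistedMulVec σ x) v = ⊤)
    (μ : ℕ → ℤ) {R : Subring L} {u : Fin n → R}
    (hu : ∀ i : Fin n, (u i : L) =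
      algebraMap E L (z ^ (-∑ t ∈ Finset.range (i + 1), μ t) * f.coeff i.rev))
    (hunit : ∀ i : Fin n, (i : ℕ) + 1 = n → IsUnit (u i)) :
    ∃ (g : GL (Fin n) L) (a : GL (Fin n) R),
      (↑g⁻¹ : Matrix (Fin n) (Fin n) L) * x * (g : Matrix (Fin n) (Fin n) L).map σ =
        (a : Matrix (Fin n) (Fin n) R).map R.subtype *
          Matrix.diagonal fun i : Fin n => algebraMap E L z ^ μ i := by
  rw [cyclicSpan_eq_span_of_aeval_eq_zero hf hv, hfn] at hspan
  obtain ⟨g, hg⟩ := exists_GL_inv_mul_mul_map_eq_companionMatrix_mul_diagonal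
    (by simpa using hz) (σ.commutes z) hspan
    (u := fun i : Fin n => algebraMap E L (-f.coeff i.rev))
    (by simpa only [algebraMap_smul] using pow_apply_eq_sum_of_aeval_eq_zero hf hfn hv) μ
  refine ⟨g, .mk'' (companionMatrix (-u)) (isUnit_det_companionMatrix fun i hi =>
    (hunit i hi).neg), hg.trans ?_⟩
  rw [Matrix.GeneralLinearGroup.val_mk'', map_companionMatrix]
  congr 2
  ext i
  simp [hu]

end LatticeBasis

section NewtonPoint

variable {ι : Type*} {n : ℕ} {ν : ℕ → ℚ} {N : ι → ℕ} {lam : ι → ℚ}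

lemma psum_sum_le_sum_mul (hν : MonotoneOn ν (Set.Iio n)) (e : (Σ i, Fin (N i)) ≃ Fin n)
    (hval : ∀ i l, ν (e ⟨i, l⟩) = lam i) (T : Finset ι) :
    psum ν (∑ i ∈ T, N i) ≤ ∑ i ∈ T, N i * lam i := by
  let U : Finset ℕ := (T.sigma fun _ => Finset.univ).map (e.toEmbedding.trans Fin.valEmbedding)
  have hcard : U.card = ∑ i ∈ T, N i := by simp [U]
  have hsum : ∑ t ∈ U, ν t = ∑ i ∈ T, N i * lam i := by simp [U, Finset.sum_sigma, hval]
  rw [← hcard, ← hsum]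
  refine sum_range_card_le_sum hν fun t ht => ?_
  obtain ⟨p, -, rfl⟩ := Finset.mem_map.1 ht
  exact (e p).isLt

lemma psum_eq_sum_mul [Fintype ι] (e : (Σ i, Fin (N i)) ≃ Fin n)
    (hval : ∀ i l, ν (e ⟨i, l⟩) = lam i) : psum ν n = ∑ i, N i * lam i := by
  rw [psum, ← Fin.sum_univ_eq_sum_range, ← e.sum_comp, Fintype.sum_sigma]
  simp [hval]

end NewtonPoint

lemma exists_GL_inv_mul_blockShiftMatrix_mul_map_eq {E L ι : Type*} [Field E] [Field L]
    [Algebra E L] [Fintype ι] [DecidableEq ι] (σ : L →ₐ[E] L) {R : Subring L} {z : E}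
    (hzR : algebraMap E L z ∈ R) (hz : Function.Injective fun t : ℤ => z ^ t) {n : ℕ} {N : ι → ℕ}
    {m : ι → ℤ} (hN : ∀ i, N i ≠ 0) (hslope : Pairwise fun i j => m i * N j ≠ m j * N i)
    (hθ : ∀ i, ∃ θ : L, Function.minimalPeriod σ θ = N i) (e : (Σ i, Fin (N i)) ≃ Fin n)
    {μ : ℕ → ℤ} (hμ : ∀ T : Finset ι, ∑ t ∈ Finset.range (∑ i ∈ T, N i), μ t ≤ ∑ i ∈ T, m i)
    (hμn : ∑ t ∈ Finset.range n, μ t = ∑ i, m i) :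
    ∃ (g : GL (Fin n) L) (a : GL (Fin n) R),
      (↑g⁻¹ : Matrix (Fin n) (Fin n) L) * blockShiftMatrix (algebraMap E L z) N m e *
          (g : Matrix (Fin n) (Fin n) L).map σ =
        (a : Matrix (Fin n) (Fin n) R).map R.subtype *
          Matrix.diagonal fun i : Fin n => algebraMap E L z ^ μ i := by
  have hz0 : z ≠ 0 := ne_zero_of_zpow_injective hz
  have hNn : ∑ i, N i = n := by simpa using Fintype.card_congr e
  obtain ⟨v, hv, hspan⟩ := exists_cyclic_vector_blockShiftMatrix σ hz hN hslope hθ e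
  let c (i : Fin n) : E :=
    z ^ (-∑ t ∈ Finset.range (i + 1), μ t) * (slopePolynomial z N m).coeff i.rev
  have hc (i : Fin n) : c i ∈ R.comap (algebraMap E L) := by
    refine zpow_neg_mul_coeff_slopePolynomial_mem (Subring.mem_comap.2 hzR) hz0 fun T hT => ?_
    have hTi : (i : ℕ) + 1 = ∑ i ∈ T, N i := by
      have := i.val_rev
      omega
    exact hTi ▸ hμ T
  have hlast (i : Fin n) (hi : (i : ℕ) + 1 = n) : c i = (-1) ^ Fintype.card ι := by
    have hrev : (i.rev : ℕ) = 0 := by rw [Fin.val_rev, hi, Nat.sub_self]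
    simp only [c]
    rw [hrev, coeff_zero_slopePolynomial hz0 hN, hi, hμn, mul_left_comm, ← zpow_add₀ hz0,
      neg_add_cancel, zpow_zero, mul_one]
  refine exists_GL_inv_mul_mul_map_eq_map_mul_diagonal hz0 (monic_slopePolynomial hN)
    ((natDegree_slopePolynomial hN).trans hNn) hv hspan μ
    (u := fun i => ⟨algebraMap E L (c i), hc i⟩) (fun i => rfl) fun i hi => ?_
  have hui : (⟨algebraMap E L (c i), hc i⟩ : R) = (-1) ^ Fintype.card ι :=
    Subtype.ext (by simp [hlast i hi])
  exact hui ▸ isUnit_one.neg.pow _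

section LaurentSeries

open LaurentSeries

/-- The ring homomorphism of Laurent series which applies `f` to every coefficient. -/
def laurentSeriesMap {A B : Type*} [Semiring A] [Semiring B] (f : A →+* B) :
    LaurentSeries A →+* LaurentSeries B where
  toFun x := x.map f
  map_one' := HahnSeries.map_one f.toMonoidWithZeroHom
  map_zero' := HahnSeries.map_zero (f : ZeroHom A B)
  map_add' _ _ := HahnSeries.map_add (f : A →+ B)
  map_mul' _ _ := HahnSeries.map_mul (f : A →ₙ+* B)

lemma coeff_laurentSeriesMap {A B : Type*} [Semiring A] [Semiring B] (f : A →+* B)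
    (x : LaurentSeries A) (t : ℤ) : (laurentSeriesMap f x).coeff t = f (x.coeff t) :=
  rfl

lemma laurentSeriesMap_single {A B : Type*} [Semiring A] [Semiring B] (f : A →+* B) (t : ℤ)
    (a : A) : laurentSeriesMap f (HahnSeries.single t a) = HahnSeries.single t (f a) :=
  HahnSeries.map_single (f : ZeroHom A B)

lemma laurentSeriesMap_single_one {A B : Type*} [Semiring A] [Semiring B] (f : A →+* B) (t : ℤ) :
    laurentSeriesMap f (HahnSeries.single t 1) = HahnSeries.single t 1 := by
  rw [laurentSeriesMap_single, map_one]

lemma minimalPeriod_laurentSeriesMap_C {A : Type*} [Semiring A] (f : A →+* A) (a : A) :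
    Function.minimalPeriod (laurentSeriesMap f) (HahnSeries.C a) = Function.minimalPeriod f a := by
  have hsemiconj : Function.Semiconj HahnSeries.C f (laurentSeriesMap f) :=
    fun b => (laurentSeriesMap_single f 0 b).symm
  refine Function.minimalPeriod_eq_minimalPeriod_iff.2 fun j => ?_
  rw [Function.IsPeriodicPt, Function.IsFixedPt, ← (hsemiconj.iterate_right j).eq,
    HahnSeries.C_injective.eq_iff]
  rfl

variable {k : Type*} [Field k]

lemma exists_minimalPeriod_iterateFrobenius_eq [IsAlgClosed k] {p : ℕ} [Fact p.Prime] [CharP k p]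
    {s n : ℕ} (hs : s ≠ 0) (hn : n ≠ 0) :
    ∃ θ : k, Function.minimalPeriod (iterateFrobenius k p s) θ = n := by
  have hq : 1 < p ^ s := Nat.one_lt_pow hs (Fact.out : p.Prime).one_lt
  have hq0 : ((p ^ s : ℕ) : k) = 0 := by simp [hs]
  have hpos (j : ℕ) : 1 ≤ (p ^ s) ^ j := Nat.one_le_pow _ _ (by omega)
  have : NeZero (((p ^ s) ^ n - 1 : ℕ) : k) := ⟨by
    rw [Nat.cast_sub (hpos n), Nat.cast_pow, hq0, zero_pow hn]
    simp⟩
  obtain ⟨θ, hθ⟩ := HasEnoughRootsOfUnity.exists_primitiveRoot k ((p ^ s) ^ n - 1)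
  have hfrob : (iterateFrobenius k p s : k → k) = fun a => a ^ p ^ s :=
    funext (iterateFrobenius_def p s)
  have hperiodic (j : ℕ) : Function.IsPeriodicPt (iterateFrobenius k p s) j θ ↔
      (p ^ s) ^ n - 1 ∣ (p ^ s) ^ j - 1 := by
    have hθ0 : θ ≠ 0 := hθ.ne_zero (NeZero.ne (((p ^ s) ^ n - 1 : ℕ) : k) ∘ by simp +contextual)
    rw [← hθ.pow_eq_one_iff_dvd, ← mul_eq_right₀ hθ0,
      pow_sub_one_mul (Nat.one_le_iff_ne_zero.1 (hpos j)), Function.IsPeriodicPt,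
      Function.IsFixedPt, hfrob, pow_iterate]
  have hfixed : Function.IsPeriodicPt (iterateFrobenius k p s) n θ := (hperiodic n).2 dvd_rfl
  have hperiod : 0 < Function.minimalPeriod (iterateFrobenius k p s) θ :=
    hfixed.minimalPeriod_pos (Nat.pos_of_ne_zero hn)
  have hdvd := (hperiodic _).1 (Function.isPeriodicPt_minimalPeriod _ θ)
  have hle := Nat.le_of_dvd (Nat.sub_pos_of_lt (Nat.one_lt_pow hperiod.ne' hq)) hdvd
  have hpow := (Nat.sub_le_sub_iff_right (hpos _)).1 hle
  exact ⟨θ, (hfixed.minimalPeriod_le (Nat.pos_of_ne_zero hn)).antisymm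
    ((Nat.pow_le_pow_iff_right hq).1 hpow)⟩

lemma exists_minimalPeriod_laurentSeriesMap_eq [IsAlgClosed k] {p : ℕ} [Fact p.Prime] [CharP k p]
    {s n : ℕ} (hs : s ≠ 0) (hn : n ≠ 0) : ∃ θ : LaurentSeries k,
      Function.minimalPeriod (laurentSeriesMap (iterateFrobenius k p s)) θ = n :=
  (exists_minimalPeriod_iterateFrobenius_eq hs hn).imp' HahnSeries.C fun θ =>
    (minimalPeriod_laurentSeriesMap_C _ θ).trans

lemma isPowerSeries_map_apply {κ : Type*} [Fintype κ] [DecidableEq κ]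
    (a : GL κ (powerSeries_as_subring k)) (i j : κ) :
    IsPowerSeries (Matrix.GeneralLinearGroup.map (powerSeries_as_subring k).subtype a i j) := by
  obtain ⟨F, -, hF⟩ := (a i j).2
  intro t ht
  exact congr(($hF).coeff t).symm.trans ((PowerSeries.coeff_coe F t).trans (if_pos ht))

lemma single_one_one_mem_powerSeries_as_subring :
    (HahnSeries.single 1 1 : LaurentSeries k) ∈ powerSeries_as_subring k :=
  ⟨PowerSeries.X, trivial, HahnSeries.ofPowerSeries_X⟩

lemma single_one_one_zpow_injective :
    Function.Injective fun t : ℤ => (HahnSeries.single 1 1 : LaurentSeries k) ^ t := by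
  intro t t' h
  simp only [← RatFunc.single_zpow] at h
  exact by simpa using congr(HahnSeries.order $h)

end LaurentSeries

lemma IsNewton.monotoneOn {n : ℕ} {d : ℤ} {ν : ℕ → ℚ} (hν : IsNewton n d ν) :
    MonotoneOn ν (Set.Iio n) :=
  monotoneOn_of_le_add_one Set.ordConnected_Iio fun j _ _ hj => hν.1 j hj

section BlockEnumeration

variable {r n : ℕ} {N : Fin r → ℕ}

lemma exists_equiv_val_eq_cum_add (hN : ∑ i, N i = n) :
    ∃ e : (Σ i, Fin (N i)) ≃ Fin n, ∀ i l, (e ⟨i, l⟩ : ℕ) = cum N i + l := by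
  refine ⟨finSigmaFinEquiv.trans (finCongr hN), fun i l => ?_⟩
  simp only [Equiv.trans_apply, finCongr_apply, Fin.val_cast, finSigmaFinEquiv_apply, cum]
  congr 1
  exact Finset.sum_bij (fun (a : Fin i) _ => Fin.castLE i.2.le a)
    (fun a _ => Finset.mem_Iio.2 a.2) (fun _ _ _ _ h => Fin.castLE_injective _ h)
    (fun b hb => ⟨⟨b, Fin.lt_def.1 (Finset.mem_Iio.1 hb)⟩, Finset.mem_univ _, rfl⟩) fun _ _ => rfl

lemma eq_blockShiftMatrix {L : Type*} [DivisionRing L] {z : L} {m : Fin r → ℤ}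
    (e : (Σ i, Fin (N i)) ≃ Fin n) (he : ∀ i l, (e ⟨i, l⟩ : ℕ) = cum N i + l)
    {x : Matrix (Fin n) (Fin n) L}
    (hx : ∀ (a b : Fin n) (i : Fin r), cum N i ≤ (b : ℕ) → (b : ℕ) < cum N i + N i →
      x a b = if (cum N i ≤ (a : ℕ) ∧ (a : ℕ) < cum N i + N i) ∧
          (a : ℤ) - cum N i = ((b : ℤ) - cum N i + m i) % N i
        then z ^ (((b : ℤ) - cum N i + m i) / N i) else 0) :
    x = blockShiftMatrix z N m e := by
  ext a b
  obtain ⟨⟨i', l'⟩, rfl⟩ := e.surjective a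
  obtain ⟨⟨i, l⟩, rfl⟩ := e.surjective b
  have hl := l.isLt
  rw [hx _ _ i (by rw [he]; omega) (by rw [he]; omega)]
  by_cases hi : i' = i
  · subst hi
    simp [blockShiftMatrix, shiftMatrix, he]
  · have hblock : ¬(cum N i ≤ (e ⟨i', l'⟩ : ℕ) ∧ (e ⟨i', l'⟩ : ℕ) < cum N i + N i) := by
      rintro ⟨hle, hlt⟩
      have : e ⟨i', l'⟩ = e ⟨i, ⟨e ⟨i', l'⟩ - cum N i, by omega⟩⟩ :=
        Fin.ext (by rw [he i, Nat.add_sub_cancel' hle])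
      exact hi congr($(e.injective this).1)
    simp [blockShiftMatrix, Matrix.blockDiagonal'_apply_ne _ _ _ hi, hblock]

end BlockEnumeration

theorem converse_mazur_GLn_general {L ι : Type*} [Field L] [Finite ι] [DecidableEq ι]
    (σ : L →+* L) (R : Subring L) {z : L} (hzR : z ∈ R) (hσz : σ z = z)
    (hz : Function.Injective fun t : ℤ => z ^ t) {n : ℕ} (ν : ℕ → ℚ)
    (hν : MonotoneOn ν (Set.Iio n)) (N : ι → ℕ) (m : ι → ℤ) (lam : ι → ℚ)
    (hlam : Function.Injective lam) (hN : ∀ i, N i ≠ 0) (e : (Σ i, Fin (N i)) ≃ Fin n)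
    (hval : ∀ i l, ν (e ⟨i, l⟩) = lam i) (hm : ∀ i, (m i : ℚ) = N i * lam i)
    (hθ : ∀ i, ∃ θ : L, Function.minimalPeriod σ θ = N i) (μ : ℕ → ℤ)
    (hμn : ∑ t ∈ Finset.range n, (μ t : ℚ) = psum ν n)
    (hμ : ∀ j, 1 ≤ j → j ≤ n → ∑ t ∈ Finset.range j, (μ t : ℚ) ≤ psum ν j) :
    ∃ (g : GL (Fin n) L) (a : GL (Fin n) R),
      (↑g⁻¹ : Matrix (Fin n) (Fin n) L) * blockShiftMatrix z N m e *
          (g : Matrix (Fin n) (Fin n) L).map σ =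
        (a : Matrix (Fin n) (Fin n) R).map R.subtype *
          Matrix.diagonal fun i : Fin n => z ^ μ i := by
  have := Fintype.ofFinite ι
  let E := σ.eqLocusField (RingHom.id L)
  let z' : E := ⟨z, hσz⟩
  have hz' : Function.Injective fun t : ℤ => z' ^ t := fun s t h => hz congr(($h : L))
  have hNne (i : ι) : (N i : ℚ) ≠ 0 := mod_cast hN i
  refine exists_GL_inv_mul_blockShiftMatrix_mul_map_eq (z := z')
    ({ σ with commutes' := Subtype.prop } : L →ₐ[E] L) hzR hz' hN ?_ hθ e (fun T => ?_) ?_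
  · intro i j hij h
    have h' : (m i : ℚ) * N j = m j * N i := mod_cast h
    rw [hm, hm] at h'
    exact hij (hlam (mul_left_cancel₀ (mul_ne_zero (hNne i) (hNne j)) (by linear_combination h')))
  · rcases T.eq_empty_or_nonempty with rfl | ⟨i, hi⟩
    · simp
    have hle : ∑ i ∈ T, N i ≤ n := by
      calc ∑ i ∈ T, N i ≤ ∑ i, N i := Finset.sum_le_univ_sum_of_nonneg fun _ => Nat.zero_le _
        _ = n := by simpa using Fintype.card_congr e
    have hpos : 1 ≤ ∑ i ∈ T, N i := (Nat.one_le_iff_ne_zero.2 (hN i)).trans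
      (Finset.single_le_sum (fun _ _ => Nat.zero_le _) hi)
    have := (hμ _ hpos hle).trans (psum_sum_le_sum_mul hν e hval T)
    simp only [← hm] at this
    exact_mod_cast this
  · rw [psum_eq_sum_mul e hval] at hμn
    simp only [← hm] at hμn
    exact_mod_cast hμn

/-- Converse of Mazur's inequality (Corollary 1.3) for `G = GL_n` over an
algebraically closed field `k` of characteristic `p`: let `ν` be a Newton point
with endpoint `d`, with distinct slopes `λ_1 < … < λ_r` of multiplicities
`n_1, …, n_r` and integers `m_i = n_i·λ_i`, and let `x = x_ν` be the block
diagonal matrix with blocks `P(n_i)^{m_i}` (described entrywise by `hx`, where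
`P(n)^m` has entry `z^{⌊(l+m)/n⌋}` in position `((l+m) mod n, l)` and `0`
elsewhere). Then for every dominant integral coweight `μ` with total `d` and
`ν ≼ μ` there is `g ∈ GL_n(k((z)))` with `g⁻¹·x·σ(g) ∈ K·z^μ·K`, where
`K = GL_n(k[[z]])` and `σ` is the coefficientwise `q`-Frobenius. -/
theorem converse_mazur_GLn (p : ℕ) (hp : p.Prime) (s : ℕ) (hs : 0 < s)
    (q : ℕ) (hq : q = p ^ s) (k : Type*) [Field k] [IsAlgClosed k] [CharP k p]
    (n : ℕ) (hn : 0 < n) (d : ℤ) (ν : ℕ → ℚ) (hν : IsNewton n d ν)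
    (r : ℕ) (lam : Fin r → ℚ) (nn : Fin r → ℕ) (m : Fin r → ℤ)
    (hlam : StrictMono lam) (hpos : ∀ i, 0 < nn i) (hsumn : ∑ i, nn i = n)
    (hval : ∀ (i : Fin r) (j : ℕ), cum nn i ≤ j → j < cum nn i + nn i → ν j = lam i)
    (hm : ∀ i, (m i : ℚ) = (nn i : ℚ) * lam i)
    (σ : Matrix (Fin n) (Fin n) (LaurentSeries k) → Matrix (Fin n) (Fin n) (LaurentSeries k))
    (hσ : ∀ (A : Matrix (Fin n) (Fin n) (LaurentSeries k)) (i j : Fin n) (t : ℤ),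
      (σ A i j).coeff t = ((A i j).coeff t) ^ q)
    (x : Matrix (Fin n) (Fin n) (LaurentSeries k))
    (hx : ∀ (a b : Fin n) (i : Fin r), cum nn i ≤ (b : ℕ) → (b : ℕ) < cum nn i + nn i →
      x a b = if (cum nn i ≤ (a : ℕ) ∧ (a : ℕ) < cum nn i + nn i) ∧
          ((a : ℕ) : ℤ) - (cum nn i : ℤ) = (((b : ℕ) : ℤ) - (cum nn i : ℤ) + m i) % (nn i : ℤ)
        then HahnSeries.single ((((b : ℕ) : ℤ) - (cum nn i : ℤ) + m i) / (nn i : ℤ)) (1 : k)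
        else 0)
    (μ : ℕ → ℤ) (hμmono : ∀ i, i + 1 < n → μ i ≤ μ (i + 1))
    (hμsum : ∑ i ∈ Finset.range n, μ i = d)
    (hdom : ∀ j, 1 ≤ j → j ≤ n → (∑ i ∈ Finset.range j, (μ i : ℚ)) ≤ psum ν j) :
    ∃ g gi : Matrix (Fin n) (Fin n) (LaurentSeries k), g * gi = 1 ∧ gi * g = 1 ∧
      ∃ a ai b bi : Matrix (Fin n) (Fin n) (LaurentSeries k),
        a * ai = 1 ∧ ai * a = 1 ∧ b * bi = 1 ∧ bi * b = 1 ∧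
        (∀ i j, IsPowerSeries (a i j)) ∧ (∀ i j, IsPowerSeries (ai i j)) ∧
        (∀ i j, IsPowerSeries (b i j)) ∧ (∀ i j, IsPowerSeries (bi i j)) ∧
        gi * x * σ g =
          a * Matrix.diagonal (fun i : Fin n => HahnSeries.single (μ (i : ℕ)) (1 : k)) * b := by
  have : Fact p.Prime := ⟨hp⟩
  have : ExpChar k p := .prime hp
  obtain ⟨e, he⟩ := exists_equiv_val_eq_cum_add hsumn
  let φ := laurentSeriesMap (iterateFrobenius k p s)
  have hσφ (A) : σ A = A.map φ := by
    ext i j t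
    rw [hσ, hq, Matrix.map_apply, coeff_laurentSeriesMap, iterateFrobenius_def]
  have hxe : x = blockShiftMatrix (HahnSeries.single 1 1) nn m e :=
    eq_blockShiftMatrix e he fun a b i hi hi' => by rw [hx a b i hi hi', RatFunc.single_zpow]
  obtain ⟨g, a, h⟩ := converse_mazur_GLn_general φ (LaurentSeries.powerSeries_as_subring k)
    single_one_one_mem_powerSeries_as_subring (laurentSeriesMap_single_one _ 1)
    single_one_one_zpow_injective ν hν.monotoneOn nn m lam hlam.injective (fun i => (hpos i).ne') e
    (fun i l => hval i _ (by rw [he]; omega) (by rw [he]; omega)) hm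
    (fun i => exists_minimalPeriod_laurentSeriesMap_eq hs.ne' (hpos i).ne') μ
    (by rw [hν.2.1, ← hμsum, Int.cast_sum]) hdom
  let toGL := Matrix.GeneralLinearGroup.map (n := Fin n)
    (LaurentSeries.powerSeries_as_subring k).subtype
  refine ⟨g, ↑g⁻¹, g.mul_inv, g.inv_mul, toGL a, ↑(toGL a)⁻¹, toGL 1, ↑(toGL 1)⁻¹,
    (toGL a).mul_inv, (toGL a).inv_mul, (toGL 1).mul_inv, (toGL 1).inv_mul,
    isPowerSeries_map_apply a, isPowerSeries_map_apply a⁻¹, isPowerSeries_map_apply 1,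
    isPowerSeries_map_apply 1⁻¹, ?_⟩
  rw [hσφ, hxe, h, map_one toGL, Units.val_one, mul_one]
  simp only [← RatFunc.single_zpow]
  rfl
end
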